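/- Let $(\mathfrak{g}, r, \psi)$ be a Lie algebra with a twisted triangular $r$-matrix structure. Then the kernel of $r^\sharp : \mathfrak{g}^* \to \mathfrak{g}$ is an abelian ideal of the Lie algebra $(\mathfrak{g}^*, [\cdot,\cdot]_{r,\psi})$. -/

import Mathlib

/-- The bracket `[α,β]_{r,ψ} = ad*_{r^♯α}(β) - ad*_{r^♯β}(α) + ψ(r^♯α, r^♯β, ·)`
on the dual of a Lie algebra `g`, where `r^♯` is the map induced by `r ∈ ∧²g` and
`ψ` is a trilinear form (a 3-cochain of `g`), written here in curried form. -/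
noncomputable def twBracket {g : Type*} [LieRing g] [LieAlgebra ℝ g]
    (rsharp : Module.Dual ℝ g →ₗ[ℝ] g)
    (ψ : g →ₗ[ℝ] g →ₗ[ℝ] Module.Dual ℝ g)
    (α β : Module.Dual ℝ g) : Module.Dual ℝ g :=
  ψ (rsharp α) (rsharp β)
    - β ∘ₗ (LieAlgebra.ad ℝ g (rsharp α))
    + α ∘ₗ (LieAlgebra.ad ℝ g (rsharp β))

/-- the kernel of `r^♯` is an abelian ideal of `(g*, [·,·]_{r,ψ})`. -/
theorem statement2 (g : Type*) [LieRing g] [LieAlgebra ℝ g] [FiniteDimensional ℝ g]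
    (rsharp : Module.Dual ℝ g →ₗ[ℝ] g)
    (hskew : ∀ α β : Module.Dual ℝ g, β (rsharp α) = - α (rsharp β))
    (ψ : g →ₗ[ℝ] g →ₗ[ℝ] Module.Dual ℝ g)
    (halt1 : ∀ X Y : g, ψ X X Y = 0)
    (halt2 : ∀ X Y : g, ψ X Y Y = 0)
    (hcocycle : ∀ X Y Z W : g,
      ψ ⁅X, Y⁆ Z W - ψ ⁅X, Z⁆ Y W + ψ ⁅X, W⁆ Y Z
        + ψ ⁅Y, Z⁆ X W - ψ ⁅Y, W⁆ X Z + ψ ⁅Z, W⁆ X Y = 0)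
    (hcybe : ∀ α β γ : Module.Dual ℝ g,
      γ ⁅rsharp α, rsharp β⁆ + α ⁅rsharp β, rsharp γ⁆ + β ⁅rsharp γ, rsharp α⁆
        = - ψ (rsharp α) (rsharp β) (rsharp γ)) :
    (∀ γ δ : Module.Dual ℝ g, rsharp γ = 0 → rsharp δ = 0 →
        twBracket rsharp ψ γ δ = 0) ∧
    (∀ α γ : Module.Dual ℝ g, rsharp γ = 0 →
        rsharp (twBracket rsharp ψ α γ) = 0) := by
  refine ⟨fun γ δ hγ hδ => ?_, fun α γ hγ => ?_⟩
  · ext x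
    simp [twBracket, hγ, hδ]
  · rw [← Module.forall_dual_apply_eq_zero_iff ℝ]
    intro β
    have h := hcybe α β γ
    simp only [hγ, lie_zero, zero_lie, map_zero, add_zero, neg_zero] at h
    rw [hskew]
    simp [twBracket, hγ, h]
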